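/- In the setting of measurable spaces S, S₀, T, T₀, G, G₀ with measurable maps r_S : S → S₀, r_T : T → T₀, r, d : G → G₀, p : S₀ → G₀, q : T₀ → G₀, and s-finite kernels λ_S, λ_T, λ_G, γ_p, γ_q concentrated respectively on the fibers of r_S, r_T, r, p, q, let μ_G⁰ be a measure on G₀ and define μ_G = ∫ λ_G^u dμ_G⁰(u), μ_P⁰ = ∫_G (γ_p^{r(x)} ⊗ δ_x ⊗ γ_q^{d(x)}) dμ_G(x), μ_P = ∫ (λ_S^s ⊗ δ_g ⊗ λ_T^t) dμ_P⁰(s,g,t), μ_T⁰ = ∫ γ_q^u dμ_G⁰(u) and μ_T = ∫ λ_T^t dμ_T⁰(t). Assume: λ_S^s(S) > 0 for every s ∈ S₀, γ_p^v(S₀) > 0 for every v ∈ G₀, λ_G^u(G) > 0 for every u ∈ G₀; and that there exist a measurable involution ι : G → G (ι ∘ ι = id) with r ∘ ι = d, and a measurable function w : G → (0, ∞) with ι_*μ_G = μ_G.withDensity w. Then the pushforward of μ_P under the projection π_T : S × G × T → T, π_T(σ, x, τ) = τ, is mutually absolutely continuous with μ_T. -/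

import Mathlib

open MeasureTheory ProbabilityTheory
open scoped ENNReal

/-!
Write `μ ∼ ν` for `ae μ = ae ν`. This relation is stable under composition with kernels, so
replacing kernels by fibrewise equivalent ones never changes a measure class. Projecting
`λ_S^s × δ_g × λ_T^t` to `T` gives `λ_S^s(S) • λ_T^t ∼ λ_T^t`, and projecting
`γ_p^{r(x)} × δ_x × γ_q^{d(x)}` to `T₀` gives a measure equivalent to `γ_q^{d(x)}`. Hence
`(π_T)_* μ_P ∼ λ_T ∘ γ_q ∘ d_* μ_G`, while `μ_T = λ_T ∘ γ_q ∘ μ_G⁰`, and it remains to see that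
`d_* μ_G ∼ μ_G⁰`: quasi-invariance gives `d_* μ_G = r_* ι_* μ_G ∼ r_* μ_G`, and `r_* μ_G ∼ μ_G⁰`
because `r_* λ_G^u` is a nonzero multiple of `δ_u`.
-/

section MeasureClass

variable {α β γ : Type*} [MeasurableSpace α] [MeasurableSpace β] [MeasurableSpace γ]
  {μ ν : Measure α}

theorem ae_eq_ae_iff_absolutelyContinuous : ae μ = ae ν ↔ μ ≪ ν ∧ ν ≪ μ := by
  rw [le_antisymm_iff, Measure.ae_le_iff_absolutelyContinuous,
    Measure.ae_le_iff_absolutelyContinuous]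

theorem ae_map_congr {f : α → β} (hf : Measurable f) (h : ae μ = ae ν) :
    ae (μ.map f) = ae (ν.map f) := by
  rw [ae_eq_ae_iff_absolutelyContinuous] at h ⊢
  exact ⟨h.1.map hf, h.2.map hf⟩

theorem ae_withDensity_eq_ae {w : α → ℝ≥0∞} (hw : AEMeasurable w μ) (hw₀ : ∀ᵐ x ∂μ, w x ≠ 0) :
    ae (μ.withDensity w) = ae μ :=
  ae_eq_ae_iff_absolutelyContinuous.mpr
    ⟨withDensity_absolutelyContinuous μ w, withDensity_absolutelyContinuous' hw hw₀⟩

theorem map_eq_smul_dirac_of_measure_fiber_compl_eq_zero {f : α → β} {b : β}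
    (h : μ (f ⁻¹' {b})ᶜ = 0) : μ.map f = μ Set.univ • Measure.dirac b := by
  have hf : f =ᵐ[μ] fun _ => b := h
  rw [Measure.map_congr hf, Measure.map_const]

theorem ae_comp_congr {κ η : Kernel α β} (hμν : ae μ = ae ν)
    (hκη : ∀ᵐ a ∂μ, ae (κ a) = ae (η a)) : ae (κ ∘ₘ μ) = ae (η ∘ₘ ν) := by
  have hηκ : ∀ᵐ a ∂ν, ae (κ a) = ae (η a) := hμν ▸ hκη
  simp only [ae_eq_ae_iff_absolutelyContinuous] at hμν hκη hηκ ⊢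
  exact ⟨hμν.1.comp (hκη.mono fun _ => And.left), hμν.2.comp (hηκ.mono fun _ => And.right)⟩

theorem eq_comp_of_forall_measurableSet {κ : Kernel α β} {ρ : Measure β}
    (h : ∀ E, MeasurableSet E → ρ E = ∫⁻ a, κ a E ∂μ) : ρ = κ ∘ₘ μ :=
  Measure.ext fun E hE => (h E hE).trans (Measure.bind_apply hE κ.aemeasurable).symm

theorem comap_comp_eq_comp_map {f : α → β} (hf : Measurable f) (κ : Kernel β γ) :
    κ.comap f hf ∘ₘ μ = κ ∘ₘ μ.map f := by
  rw [← Kernel.comp_deterministic_eq_comap, ← Measure.comp_assoc,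
    Measure.deterministic_comp_eq_map]

theorem ae_map_comp_eq_ae_of_fiber {f : β → α} (hf : Measurable f) {κ : Kernel α β}
    (hκ : ∀ᵐ a ∂μ, κ a (f ⁻¹' {a})ᶜ = 0) (hκ₀ : ∀ᵐ a ∂μ, κ a ≠ 0) :
    ae ((κ ∘ₘ μ).map f) = ae μ := by
  have map_fiber : ∀ᵐ a ∂μ, ae (κ.map f a) = ae ((Kernel.id : Kernel α α) a) := by
    filter_upwards [hκ, hκ₀] with a ha ha₀
    rw [Kernel.map_apply _ hf, map_eq_smul_dirac_of_measure_fiber_compl_eq_zero ha,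
      Measure.ae_ennreal_smul_measure_eq (Measure.measure_univ_ne_zero.mpr ha₀), Kernel.id_apply]
  rw [Measure.map_comp μ κ hf, ae_comp_congr rfl map_fiber, Measure.id_comp]

theorem ae_map_snd_prod_comp {κ : Kernel α β} {η : Kernel α γ}
    [IsSFiniteKernel κ] [IsSFiniteKernel η] (hκ₀ : ∀ᵐ a ∂μ, κ a ≠ 0) :
    ae (((κ ×ₖ η) ∘ₘ μ).map Prod.snd) = ae (η ∘ₘ μ) := by
  rw [Measure.map_comp μ _ measurable_snd]
  refine ae_comp_congr rfl (hκ₀.mono fun a ha₀ => ?_)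
  rw [Kernel.map_apply _ measurable_snd, Kernel.prod_apply, Measure.map_snd_prod,
    Measure.ae_ennreal_smul_measure_eq (Measure.measure_univ_ne_zero.mpr ha₀)]

end MeasureClass

section WeakPullback

variable {Ω A B C X Y : Type*} [MeasurableSpace Ω] [MeasurableSpace A] [MeasurableSpace B]
  [MeasurableSpace C] [MeasurableSpace X] [MeasurableSpace Y]

theorem ae_map_snd_snd_eq_ae_comp_map {a : Ω → A} {b : Ω → B} {c : Ω → C} (ha : Measurable a)
    (hb : Measurable b) (hc : Measurable c) {κ : Kernel A X} {η : Kernel C Y}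
    [IsSFiniteKernel κ] [IsSFiniteKernel η] {μ : Measure Ω}
    {ν : Measure (X × B × Y)} (hκ₀ : ∀ᵐ ω ∂μ, κ (a ω) ≠ 0)
    (hν : ∀ E, MeasurableSet E →
      ν E = ∫⁻ ω, ((κ (a ω)).prod ((Measure.dirac (b ω)).prod (η (c ω)))) E ∂μ) :
    ae (ν.map fun z => z.2.2) = ae (η ∘ₘ μ.map c) := by
  let κ' : Kernel Ω X := κ.comap a ha
  let δ : Kernel Ω B := Kernel.deterministic b hb
  let η' : Kernel Ω Y := η.comap c hc
  have ν_eq : ν = (κ' ×ₖ (δ ×ₖ η')) ∘ₘ μ := by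
    refine eq_comp_of_forall_measurableSet fun E hE => ?_
    simpa only [κ', δ, η', Kernel.prod_apply, Kernel.comap_apply, Kernel.deterministic_apply]
      using hν E hE
  calc ae (ν.map fun z => z.2.2) = ae ((ν.map Prod.snd).map Prod.snd) := by
        rw [Measure.map_map measurable_snd measurable_snd]; rfl
    _ = ae (((δ ×ₖ η') ∘ₘ μ).map Prod.snd) := by
        rw [ν_eq]
        exact ae_map_congr measurable_snd (ae_map_snd_prod_comp hκ₀)
    _ = ae (η' ∘ₘ μ) :=
        ae_map_snd_prod_comp (.of_forall fun ω => IsProbabilityMeasure.ne_zero (δ ω))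
    _ = ae (η ∘ₘ μ.map c) := by rw [comap_comp_eq_comp_map hc η]

theorem ae_map_source_eq_ae {G G₀ : Type*} [MeasurableSpace G] [MeasurableSpace G₀]
    {r d : G → G₀} {ι : G → G} {lamG : Kernel G₀ G} {μG0 : Measure G₀} {μG : Measure G}
    (hr : Measurable r) (hι : Measurable ι) (hrι : r ∘ ι = d)
    (hlamG : ∀ u, lamG u (r ⁻¹' {u})ᶜ = 0) (hGpos : ∀ u, 0 < lamG u Set.univ)
    (hμG : ∀ E, MeasurableSet E → μG E = ∫⁻ u, lamG u E ∂μG0) (hμGι : ae (μG.map ι) = ae μG) :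
    ae (μG.map d) = ae μG0 :=
  calc ae (μG.map d) = ae ((μG.map ι).map r) := by rw [Measure.map_map hr hι, hrι]
    _ = ae (μG.map r) := ae_map_congr hr hμGι
    _ = ae μG0 := by
        rw [eq_comp_of_forall_measurableSet hμG]
        exact ae_map_comp_eq_ae_of_fiber hr (.of_forall hlamG)
          (.of_forall fun u => Measure.measure_univ_pos.mp (hGpos u))

theorem stmt_14_general {S S₀ T T₀ G G₀ : Type*}
    [MeasurableSpace S] [MeasurableSpace S₀] [MeasurableSpace T] [MeasurableSpace T₀]
    [MeasurableSpace G] [MeasurableSpace G₀] {r d : G → G₀} (hr : Measurable r) (hd : Measurable d)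
    {lamS : Kernel S₀ S} {lamT : Kernel T₀ T} {γp : Kernel G₀ S₀} {γq : Kernel G₀ T₀}
    [IsSFiniteKernel lamS] [IsSFiniteKernel lamT] [IsSFiniteKernel γp] [IsSFiniteKernel γq]
    {μG0 : Measure G₀} {μG : Measure G} {μP0 : Measure (S₀ × G × T₀)} {μP : Measure (S × G × T)}
    {μT0 : Measure T₀} {μT : Measure T}
    (hμP0 : ∀ E, MeasurableSet E →
      μP0 E = ∫⁻ x, ((γp (r x)).prod ((Measure.dirac x).prod (γq (d x)))) E ∂μG)
    (hμP : ∀ E, MeasurableSet E →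
      μP E = ∫⁻ w, ((lamS w.1).prod ((Measure.dirac w.2.1).prod (lamT w.2.2))) E ∂μP0)
    (hμT0 : ∀ E, MeasurableSet E → μT0 E = ∫⁻ u, γq u E ∂μG0)
    (hμT : ∀ E, MeasurableSet E → μT E = ∫⁻ t, lamT t E ∂μT0)
    (hSpos : ∀ s, 0 < lamS s Set.univ) (hγppos : ∀ v, 0 < γp v Set.univ)
    (hμGd : ae (μG.map d) = ae μG0) :
    ae (μP.map fun z => z.2.2) = ae μT :=
  have π_μP0 : ae (μP0.map fun z => z.2.2) = ae μT0 :=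
    calc ae (μP0.map fun z => z.2.2) = ae (γq ∘ₘ μG.map d) :=
          ae_map_snd_snd_eq_ae_comp_map hr measurable_id hd
            (.of_forall fun x => Measure.measure_univ_pos.mp (hγppos (r x))) hμP0
      _ = ae (γq ∘ₘ μG0) := ae_comp_congr hμGd (.of_forall fun _ => rfl)
      _ = ae μT0 := by rw [eq_comp_of_forall_measurableSet hμT0]
  calc ae (μP.map fun z => z.2.2) = ae (lamT ∘ₘ μP0.map fun z => z.2.2) :=
        ae_map_snd_snd_eq_ae_comp_map measurable_fst measurable_snd.fst measurable_snd.snd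
          (.of_forall fun z => Measure.measure_univ_pos.mp (hSpos z.1)) hμP
    _ = ae (lamT ∘ₘ μT0) := ae_comp_congr π_μP0 (.of_forall fun _ => rfl)
    _ = ae μT := by rw [eq_comp_of_forall_measurableSet hμT]

end WeakPullback

/-- Proposition 6.2 (π_T-half): the projection `π_T : P → T` of the weak pullback
is measure class preserving, `(π_T)_*(μ_P) ∼ μ_T`, using the quasi-invariance of
`μ_G` encoded by the involution `ι` and the positive density `w`. -/
theorem stmt_14 {S S₀ T T₀ G G₀ : Type*}
    [MeasurableSpace S] [MeasurableSpace S₀] [MeasurableSpace T] [MeasurableSpace T₀]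
    [MeasurableSpace G] [MeasurableSpace G₀]
    (rS : S → S₀) (rT : T → T₀) (r d : G → G₀) (p : S₀ → G₀) (q : T₀ → G₀)
    (hrS : Measurable rS) (hrT : Measurable rT) (hr : Measurable r) (hd : Measurable d)
    (hp : Measurable p) (hq : Measurable q)
    (lamS : Kernel S₀ S) (lamT : Kernel T₀ T) (lamG : Kernel G₀ G)
    (γp : Kernel G₀ S₀) (γq : Kernel G₀ T₀)
    [IsSFiniteKernel lamS] [IsSFiniteKernel lamT] [IsSFiniteKernel lamG]
    [IsSFiniteKernel γp] [IsSFiniteKernel γq]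
    (hlamS : ∀ s, lamS s ((rS ⁻¹' {s})ᶜ) = 0)
    (hlamT : ∀ t, lamT t ((rT ⁻¹' {t})ᶜ) = 0)
    (hlamG : ∀ u, lamG u ((r ⁻¹' {u})ᶜ) = 0)
    (hγp : ∀ u, γp u ((p ⁻¹' {u})ᶜ) = 0)
    (hγq : ∀ u, γq u ((q ⁻¹' {u})ᶜ) = 0)
    (μG0 : Measure G₀) (μG : Measure G)
    (μP0 : Measure (S₀ × G × T₀)) (μP : Measure (S × G × T))
    (μT0 : Measure T₀) (μT : Measure T)
    (hμG : ∀ E : Set G, MeasurableSet E → μG E = ∫⁻ u, lamG u E ∂μG0)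
    (hμP0 : ∀ E : Set (S₀ × G × T₀), MeasurableSet E →
      μP0 E = ∫⁻ x, ((γp (r x)).prod ((Measure.dirac x).prod (γq (d x)))) E ∂μG)
    (hμP : ∀ E : Set (S × G × T), MeasurableSet E →
      μP E = ∫⁻ w, ((lamS w.1).prod ((Measure.dirac w.2.1).prod (lamT w.2.2))) E ∂μP0)
    (hμT0 : ∀ E : Set T₀, MeasurableSet E → μT0 E = ∫⁻ u, γq u E ∂μG0)
    (hμT : ∀ E : Set T, MeasurableSet E → μT E = ∫⁻ t, lamT t E ∂μT0)
    (hSpos : ∀ s, 0 < lamS s Set.univ)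
    (hγppos : ∀ v, 0 < γp v Set.univ)
    (hGpos : ∀ u, 0 < lamG u Set.univ)
    (ι : G → G) (hι : Measurable ι) (hinv : ι ∘ ι = id) (hrι : r ∘ ι = d)
    (w : G → ℝ≥0∞) (hw : Measurable w)
    (hwpos : ∀ x, 0 < w x) (hwfin : ∀ x, w x < ∞)
    (hmap : μG.map ι = μG.withDensity w) :
    μP.map (fun z : S × G × T => z.2.2) ≪ μT ∧
    μT ≪ μP.map (fun z : S × G × T => z.2.2) := by
  have source_equiv : ae (μG.map d) = ae μG0 :=
    ae_map_source_eq_ae hr hι hrι hlamG hGpos hμG <| hmap ▸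
      ae_withDensity_eq_ae hw.aemeasurable (.of_forall fun x => (hwpos x).ne')
  exact ae_eq_ae_iff_absolutelyContinuous.mp
    (stmt_14_general hr hd hμP0 hμP hμT0 hμT hSpos hγppos source_equiv)
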